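/- arXiv:2308.10394 — 2 statements merged into one kernel-verified Lean document; each statement's English description precedes it below -/
import Mathlib

section
/- Let G be a subgroup of S_n with block partition 𝓑 and orbit cut {B_1,…,B_ℓ}. If the induced permutation group G↺𝓑 on 𝓑 is transitive (so ℓ = 1), then, with N := {σ ∈ G : σ[B] = B for every B ∈ 𝓑}, the cardinality of U_{G⋌𝓑} equals |G| · (1 + 3n/|G| + (|G↺B_1|/|N|) · (|𝓑|·n / |G↺𝓑|)). -/
/-!
The set `G|_B` is the orbit of the inclusion `B → T` under `G` acting on functions `B → T`, and the
stabilizer of this inclusion is the pointwise stabilizer of `B`. Hence `|G|_B|` is the index of the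
pointwise stabilizer, and passing through the setwise stabilizer of `B` splits this index into
`|G·B|` and `|G↺B|`. Blocks in one orbit have conjugate pointwise stabilizers, so if `G` is
transitive on `𝓑` then `|G|_B| = |𝓑| · |G↺B₁|` for every `B ∈ 𝓑`. Each `j ∈ T` lies in exactly one
block, so there are `n · |𝓑| · |G↺B₁|` points `(j, μ)`.

The group `G↺𝓑` arises in the same way from the action of `G` on subsets of `T`, restricted to `𝓑`,
so the pointwise stabilizer `N` of `𝓑` satisfies `|N| · |G↺𝓑| = |G|`.
-/

/-- The set of restrictions `θ|_B` (as functions `B → Fin n`) of elements `θ ∈ G`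
to blocks `B ∈ 𝓑`, i.e. `⋃_{B ∈ 𝓑} G|_B`. -/
def Restr (n : ℕ) (G : Subgroup (Equiv.Perm (Fin n))) (𝓑 : Set (Set (Fin n))) :
    Set ((B : Set (Fin n)) × (B → Fin n)) :=
  { p | p.1 ∈ 𝓑 ∧ ∃ θ ∈ G, p.2 = fun x => θ x.1 }

/-- The underlying set of the ordered set `U_{G⋌𝓑}`:
the fence `F = {ℓ_1,u_1,…,ℓ_n,u_n}` (constructors `low`, `up`), the copy of `G`
(constructor `grp`), the sets `D^μ = dom(μ) × {μ}` (constructor `cell`), and the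
copy of `T = {1,…,n}` (constructor `pt`). -/
inductive UPt (n : ℕ) (G : Subgroup (Equiv.Perm (Fin n))) (𝓑 : Set (Set (Fin n))) where
  | low : Fin n → UPt n G 𝓑
  | up : Fin n → UPt n G 𝓑
  | grp : G → UPt n G 𝓑
  | cell : (μ : Restr n G 𝓑) → (j : μ.1.1) → UPt n G 𝓑
  | pt : Fin n → UPt n G 𝓑

/-- The generating strict comparabilities of `U_{G⋌𝓑}`:
`ℓ_i < u_i`, `ℓ_{i+1} < u_i`, `u_j < (j,μ)`, `(j,μ) < μ(j)`, and `θ < (j, θ|_B)`. -/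
inductive UStep (n : ℕ) (G : Subgroup (Equiv.Perm (Fin n))) (𝓑 : Set (Set (Fin n))) :
    UPt n G 𝓑 → UPt n G 𝓑 → Prop where
  | fence_eq (i : Fin n) : UStep n G 𝓑 (.low i) (.up i)
  | fence_succ (i j : Fin n) (h : (j : ℕ) = (i : ℕ) + 1) : UStep n G 𝓑 (.low j) (.up i)
  | up_cell (μ : Restr n G 𝓑) (j : μ.1.1) : UStep n G 𝓑 (.up j.1) (.cell μ j)
  | cell_pt (μ : Restr n G 𝓑) (j : μ.1.1) : UStep n G 𝓑 (.cell μ j) (.pt (μ.1.2 j))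
  | grp_cell (θ : G) (μ : Restr n G 𝓑) (j : μ.1.1)
      (h : ∀ x : μ.1.1, μ.1.2 x = (θ : Equiv.Perm (Fin n)) x.1) :
      UStep n G 𝓑 (.grp θ) (.cell μ j)

/-- Rank function used to prove antisymmetry of the generated order. -/
def UPt.rank {n : ℕ} {G : Subgroup (Equiv.Perm (Fin n))} {𝓑 : Set (Set (Fin n))} :
    UPt n G 𝓑 → ℕ
  | .low _ => 0
  | .grp _ => 0
  | .up _ => 1
  | .cell _ _ => 2
  | .pt _ => 3

theorem UStep.rank_lt {n : ℕ} {G : Subgroup (Equiv.Perm (Fin n))} {𝓑 : Set (Set (Fin n))}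
    {x y : UPt n G 𝓑} (h : UStep n G 𝓑 x y) : x.rank < y.rank := by
  cases h <;> simp [UPt.rank]

/-- The order of `U_{G⋌𝓑}`: the reflexive-transitive closure of the generating
comparabilities. -/
instance UPt.instPartialOrder (n : ℕ) (G : Subgroup (Equiv.Perm (Fin n)))
    (𝓑 : Set (Set (Fin n))) : PartialOrder (UPt n G 𝓑) where
  le := Relation.ReflTransGen (UStep n G 𝓑)
  le_refl _ := Relation.ReflTransGen.refl
  le_trans _ _ _ := Relation.ReflTransGen.trans
  le_antisymm a b hab hba := by
    have mono : ∀ {x y : UPt n G 𝓑}, Relation.ReflTransGen (UStep n G 𝓑) x y →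
        x.rank ≤ y.rank := by
      intro x y h
      induction h with
      | refl => exact le_rfl
      | tail _ h2 ih => exact ih.trans h2.rank_lt.le
    rcases hab.cases_head with h | ⟨c, hc, hcb⟩
    · exact h
    rcases hba.cases_head with h | ⟨d, hd, hda⟩
    · exact h.symm
    have h1 := hc.rank_lt
    have h2 := mono hcb
    have h3 := hd.rank_lt
    have h4 := mono hda
    omega

/-- `B` is a block for `G`: for every `σ ∈ G`, `σ[B] ∩ B ≠ ∅` implies `σ[B] = B`. -/
def IsBlockOf (n : ℕ) (G : Subgroup (Equiv.Perm (Fin n))) (B : Set (Fin n)) : Prop :=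
  ∀ σ ∈ G, ((σ : Equiv.Perm (Fin n)) '' B ∩ B).Nonempty → (σ : Equiv.Perm (Fin n)) '' B = B

/-- A block partition `𝓑 = ⋃_{j=1}^ℓ G·B_j` for `G` with orbit cut `{B_1,…,B_ℓ}`
(the `B_j` are the `cut j`): the `B_j` are nonempty blocks, the family of all images
`σ[B_i]` (`σ ∈ G`) partitions `{1,…,n}`, and distinct members of the orbit cut lie in
distinct `G`-orbits of blocks. -/
structure BlockPartition (n : ℕ) (G : Subgroup (Equiv.Perm (Fin n))) where
  ℓ : ℕ
  cut : Fin ℓ → Set (Fin n)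
  nonempty_cut : ∀ i, (cut i).Nonempty
  isBlock_cut : ∀ i, IsBlockOf n G (cut i)
  partitions : ∀ x : Fin n,
    ∃! C : Set (Fin n), (∃ i, ∃ σ ∈ G, (σ : Equiv.Perm (Fin n)) '' cut i = C) ∧ x ∈ C
  cut_distinct_orbits : ∀ i j : Fin ℓ, ∀ σ ∈ G,
    (σ : Equiv.Perm (Fin n)) '' cut i = cut j → i = j

/-- The block partition `𝓑 = ⋃_{j=1}^ℓ G·B_j` as a set of subsets of `{1,…,n}`. -/
def BlockPartition.blocks {n : ℕ} {G : Subgroup (Equiv.Perm (Fin n))}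
    (P : BlockPartition n G) : Set (Set (Fin n)) :=
  { C | ∃ i, ∃ σ ∈ G, (σ : Equiv.Perm (Fin n)) '' P.cut i = C }

/-- Composition `σ ∘ μ` of a restriction `μ = θ|_B` with `σ ∈ G`; this is the
restriction `(σθ)|_B`. -/
def Restr.comp {n : ℕ} {G : Subgroup (Equiv.Perm (Fin n))} {𝓑 : Set (Set (Fin n))}
    (σ : G) (μ : Restr n G 𝓑) : Restr n G 𝓑 :=
  ⟨⟨μ.1.1, fun x => (σ : Equiv.Perm (Fin n)) (μ.1.2 x)⟩, by
    obtain ⟨hB, θ, hθ, hf⟩ := μ.2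
    refine ⟨hB, (σ : Equiv.Perm (Fin n)) * θ, mul_mem σ.2 hθ, ?_⟩
    funext x
    simp [hf]⟩

open scoped Pointwise

section Restrictions

variable (G : Type*) [Group G] {α : Type*} [MulAction G α] (s : Set α)

/-- The set `G|_s` of the restrictions `x ↦ g • x` to `s` of the elements of `G`, encoded as the
orbit of the inclusion of `s` under the pointwise action of `G` on functions. For the setwise
stabilizer of `s` in place of `G` this is `G↺s`, and for the action of `G` on `Set α` and a family
`𝓑` of sets it is `G↺𝓑`. -/
def restrictions : Set (s → α) :=
  MulAction.orbit G ((↑) : s → α)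

lemma stabilizer_subtypeVal :
    MulAction.stabilizer G ((↑) : s → α) = fixingSubgroup G s := by
  ext g
  simp [mem_fixingSubgroup_iff, funext_iff]

lemma ncard_restrictions : (restrictions G s).ncard = (fixingSubgroup G s).index := by
  rw [restrictions, ← MulAction.index_stabilizer, stabilizer_subtypeVal]

lemma card_fixingSubgroup_mul_ncard_restrictions :
    Nat.card (fixingSubgroup G s) * (restrictions G s).ncard = Nat.card G := by
  rw [ncard_restrictions, Subgroup.card_mul_index]

variable {G} in
lemma fixingSubgroup_eq_subgroupOf (H : Subgroup G) :
    fixingSubgroup H s = (fixingSubgroup G s).subgroupOf H := by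
  ext h
  simp [mem_fixingSubgroup_iff, Subgroup.mem_subgroupOf, Subgroup.smul_def]

lemma ncard_restrictions_eq_mul_ncard_orbit :
    (restrictions G s).ncard =
      (restrictions (MulAction.stabilizer G s) s).ncard * (MulAction.orbit G s).ncard := by
  rw [ncard_restrictions, ncard_restrictions, fixingSubgroup_eq_subgroupOf,
    ← MulAction.index_stabilizer]
  exact (Subgroup.relIndex_mul_index (MulAction.fixingSubgroup_le_stabilizer G s)).symm

variable {G} in
lemma ncard_restrictions_smul (g : G) :
    (restrictions G (g • s)).ncard = (restrictions G s).ncard := by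
  rw [ncard_restrictions, ncard_restrictions,
    SubMulAction.fixingSubgroup_smul_eq_fixingSubgroup_map_conj]
  exact Subgroup.index_map_equiv _ (MulAut.conj g)

end Restrictions

section Perm

variable {α : Type*} (G : Subgroup (Equiv.Perm α))

lemma restrictions_perm (s : Set α) :
    restrictions G s = {f | ∃ σ ∈ G, f = fun x => (σ : Equiv.Perm α) x.1} := by
  ext f
  constructor
  · rintro ⟨⟨σ, hσ⟩, rfl⟩
    exact ⟨σ, hσ, rfl⟩
  · rintro ⟨σ, hσ, rfl⟩
    exact ⟨⟨σ, hσ⟩, rfl⟩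

lemma restrictions_stabilizer_perm (s : Set α) :
    restrictions (MulAction.stabilizer G s) s =
      {f | ∃ σ ∈ G, (σ : Equiv.Perm α) '' s = s ∧ f = fun x => (σ : Equiv.Perm α) x.1} := by
  ext f
  constructor
  · rintro ⟨⟨⟨σ, hσ⟩, hσs⟩, rfl⟩
    exact ⟨σ, hσ, hσs, rfl⟩
  · rintro ⟨σ, hσ, hσs, rfl⟩
    exact ⟨⟨⟨σ, hσ⟩, hσs⟩, rfl⟩

lemma restrictions_set_perm (𝓑 : Set (Set α)) :
    restrictions G 𝓑 =
      {F | ∃ σ ∈ G, ∀ B : 𝓑, F B = (σ : Equiv.Perm α) '' (B : Set α)} := by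
  ext F
  constructor
  · rintro ⟨⟨σ, hσ⟩, rfl⟩
    exact ⟨σ, hσ, fun _ => rfl⟩
  · rintro ⟨σ, hσ, hF⟩
    exact ⟨⟨σ, hσ⟩, funext fun B => (hF B).symm⟩

lemma card_fixingSubgroup_set_perm (𝓑 : Set (Set α)) :
    Nat.card (fixingSubgroup G 𝓑) =
      Nat.card {σ : Equiv.Perm α | σ ∈ G ∧ ∀ B ∈ 𝓑, σ '' B = B} :=
  Nat.card_congr <|
    (Equiv.subtypeEquivRight fun _ => mem_fixingSubgroup_iff G).trans
      (Equiv.subtypeSubtypeEquivSubtypeInter (· ∈ G) fun σ => ∀ B ∈ 𝓑, σ '' B = B)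

end Perm

namespace UPt

variable {n : ℕ} {G : Subgroup (Equiv.Perm (Fin n))} {𝓑 : Set (Set (Fin n))}

/-- The decomposition of `U_{G⋌𝓑}` into `F`, `G`, the union of the `D^μ`, and `T`. A pair `(j, μ)`
is encoded by the block `B = dom μ`, the point `j ∈ B`, and `μ ∈ G|_B`. -/
def equivSum : UPt n G 𝓑 ≃ (Fin n ⊕ Fin n) ⊕ G ⊕
    (Σ p : (Σ B : 𝓑, (B : Set (Fin n))), restrictions G (p.1 : Set (Fin n))) ⊕ Fin n where
  toFun
    | .low i => .inl (.inl i)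
    | .up i => .inl (.inr i)
    | .grp θ => .inr (.inl θ)
    | .cell μ j =>
      .inr (.inr (.inl ⟨⟨⟨μ.1.1, μ.2.1⟩, j⟩, μ.1.2, (restrictions_perm G _).superset μ.2.2⟩))
    | .pt i => .inr (.inr (.inr i))
  invFun
    | .inl (.inl i) => .low i
    | .inl (.inr i) => .up i
    | .inr (.inl θ) => .grp θ
    | .inr (.inr (.inl ⟨⟨B, j⟩, f⟩)) =>
      .cell ⟨⟨B, f⟩, B.2, (restrictions_perm G _).subset f.2⟩ j
    | .inr (.inr (.inr i)) => .pt i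
  left_inv x := by cases x <;> rfl
  right_inv x := by rcases x with (_ | _) | _ | _ | _ <;> rfl

lemma card_eq_of_forall_ncard_restrictions_eq (h𝓑 : ∀ x, ∃! B : 𝓑, x ∈ (B : Set (Fin n))) {k : ℕ}
    (hk : ∀ B ∈ 𝓑, (restrictions G B).ncard = k) :
    Nat.card (UPt n G 𝓑) = Nat.card G + 3 * n + n * k := by
  have card_points : Nat.card (Σ B : 𝓑, (B : Set (Fin n))) = n :=
    (Nat.card_congr (Set.sigmaEquiv _ h𝓑)).trans (Nat.card_fin n)
  have card_cells : Nat.card (Σ p : (Σ B : 𝓑, (B : Set (Fin n))),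
      restrictions G (p.1 : Set (Fin n))) = n * k := by
    have := Fintype.ofFinite (Σ B : 𝓑, (B : Set (Fin n)))
    have card_fiber (p : Σ B : 𝓑, (B : Set (Fin n))) :
        Nat.card (restrictions G (p.1 : Set (Fin n))) = k := hk p.1 p.1.2
    rw [Nat.card_sigma, Fintype.sum_congr _ _ card_fiber, Finset.sum_const,
      Finset.card_univ, ← Nat.card_eq_fintype_card, card_points, smul_eq_mul]
  rw [Nat.card_congr equivSum]
  simp only [Nat.card_sum, Nat.card_fin, card_cells]
  ring

end UPt

namespace BlockPartition

variable {n : ℕ} {G : Subgroup (Equiv.Perm (Fin n))} (P : BlockPartition n G)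

lemma existsUnique_mem_blocks (x : Fin n) : ∃! B : P.blocks, x ∈ (B : Set (Fin n)) := by
  obtain ⟨B, ⟨hB, hx⟩, huniq⟩ := P.partitions x
  exact ⟨⟨B, hB⟩, hx, fun C hC => Subtype.ext (huniq C ⟨C.2, hC⟩)⟩

lemma orbit_cut_subset_blocks (i : Fin P.ℓ) : MulAction.orbit G (P.cut i) ⊆ P.blocks := by
  rintro _ ⟨σ, rfl⟩
  exact ⟨i, σ, σ.2, rfl⟩

lemma blocks_eq_orbit_cut
    (htrans : ∀ B ∈ P.blocks, ∀ C ∈ P.blocks, ∃ σ ∈ G, (σ : Equiv.Perm (Fin n)) '' B = C)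
    (i : Fin P.ℓ) : P.blocks = MulAction.orbit G (P.cut i) := by
  refine (Set.Subset.antisymm · (P.orbit_cut_subset_blocks i)) fun C hC => ?_
  obtain ⟨σ, hσ, hσC⟩ := htrans _ (P.orbit_cut_subset_blocks i (MulAction.mem_orbit_self _)) C hC
  exact ⟨⟨σ, hσ⟩, hσC⟩

lemma card_uPt {i : Fin P.ℓ} (h : P.blocks = MulAction.orbit G (P.cut i)) :
    Nat.card (UPt n G P.blocks) = Nat.card G + 3 * n +
      n * ((restrictions (MulAction.stabilizer G (P.cut i)) (P.cut i)).ncard *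
        Nat.card P.blocks) := by
  refine UPt.card_eq_of_forall_ncard_restrictions_eq P.existsUnique_mem_blocks fun B hB => ?_
  obtain ⟨σ, rfl⟩ := h ▸ hB
  rw [ncard_restrictions_smul, ncard_restrictions_eq_mul_ncard_orbit, Nat.card_coe_set_eq, ← h]

end BlockPartition

/-- If the induced permutation group `G↺𝓑` on `𝓑` is transitive (so the
orbit cut is a single block `B_1`, i.e. `ℓ = 1`, and the formula below holds for it), then,
with `N = {σ ∈ G : σ[B] = B for all B ∈ 𝓑}`,
`|U_{G⋌𝓑}| = |G| · (1 + 3n/|G| + (|G↺B_1|/|N|) · (|𝓑|·n / |G↺𝓑|))`. -/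
theorem size_transitive_on_blocks (n : ℕ) (hn : 1 ≤ n) (G : Subgroup (Equiv.Perm (Fin n)))
    (P : BlockPartition n G)
    (htrans : ∀ B ∈ P.blocks, ∀ C ∈ P.blocks, ∃ σ ∈ G, (σ : Equiv.Perm (Fin n)) '' B = C) :
    ∀ i : Fin P.ℓ,
      (Nat.card (UPt n G P.blocks) : ℚ) =
        (Nat.card G : ℚ) *
          (1 + 3 * n / (Nat.card G : ℚ) +
            ((Nat.card {f : (P.cut i) → Fin n | ∃ σ ∈ G,
                (σ : Equiv.Perm (Fin n)) '' P.cut i = P.cut i ∧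
                f = fun x => (σ : Equiv.Perm (Fin n)) x.1} : ℚ) /
              (Nat.card {σ : Equiv.Perm (Fin n) | σ ∈ G ∧ ∀ B ∈ P.blocks, σ '' B = B} : ℚ)) *
            ((Nat.card P.blocks : ℚ) * n /
              (Nat.card {F : P.blocks → Set (Fin n) | ∃ σ ∈ G,
                ∀ B : P.blocks, F B = (σ : Equiv.Perm (Fin n)) '' (B : Set (Fin n))} : ℚ))) := by
  intro i
  have card_group := card_fixingSubgroup_mul_ncard_restrictions G P.blocks
  have kernel_ne_zero : Nat.card (fixingSubgroup G P.blocks) ≠ 0 := Nat.card_pos.ne'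
  have induced_ne_zero : (restrictions G P.blocks).ncard ≠ 0 :=
    right_ne_zero_of_mul (card_group.trans_ne Nat.card_pos.ne')
  rw [P.card_uPt (P.blocks_eq_orbit_cut htrans i), ← restrictions_stabilizer_perm,
    ← card_fixingSubgroup_set_perm, ← restrictions_set_perm, Nat.card_coe_set_eq (restrictions _ _),
    Nat.card_coe_set_eq (restrictions _ _), ← card_group]
  push_cast
  field_simp
end

section
/- Let G be a subgroup of S_n with block partition 𝓑. Every order-automorphism Ψ of U_{G⋌𝓑} maps T onto itself, the restriction σ := Ψ|_T is an element of G, and Ψ is uniquely determined by σ: namely Ψ fixes F pointwise, Ψ(θ) = σθ for every θ ∈ G, and Ψ(j,μ) = (j, σ∘μ) for every μ and every j ∈ dom(μ). -/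
section Order

variable {ι α : Type*}

theorem eq_of_injective_of_surjective_of_le [PartialOrder α] [WellFoundedLT α] {f g : ι → α}
    (hf : f.Injective) (hg : g.Surjective) (hfg : f ≤ g) : f = g := by
  suffices ∀ x i, g i = x → f i = g i from funext fun i => this _ i rfl
  intro x
  induction x using WellFoundedLT.induction with
  | ind x ih =>
    rintro i rfl
    by_contra hne
    obtain ⟨j, hj⟩ := hg (f i)
    have hji : f j = f i := (ih (g j) (hj ▸ (hfg i).lt_of_ne hne) j rfl).trans hj
    exact hne (hj.symm.trans (congrArg g (hf hji)))

theorem eq_id_of_forall_wcovBy_le [LinearOrder α] [SuccOrder α] [IsSuccArchimedean α]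
    [WellFoundedLT α] {a b : α → α} (ha : a.Surjective) (hb : b.Injective)
    (hab : ∀ i j, i ⩿ j → b i ≤ a j) : a = id ∧ b = id := by
  obtain rfl : b = a :=
    eq_of_injective_of_surjective_of_le hb ha fun i => hab i i (WCovBy.refl i)
  have hmono : StrictMono b := strictMono_of_lt_succ fun i hi =>
    (hab i _ (Order.wcovBy_succ i)).lt_of_ne (hb.ne (Order.lt_succ_of_not_isMax hi).ne)
  have hid : id = b :=
    eq_of_injective_of_surjective_of_le Function.injective_id ha fun _ => hmono.le_apply
  exact ⟨hid.symm, hid.symm⟩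

end Order

namespace Restr

variable {n : ℕ} {G : Subgroup (Equiv.Perm (Fin n))} {𝓑 : Set (Set (Fin n))}

/-- The restriction `θ|_B`, as an element of `⋃_{B ∈ 𝓑} G|_B`. It is reducible, so that its domain
is recognized as `B` in the types of cells. -/
abbrev restrict (θ : G) {B : Set (Fin n)} (hB : B ∈ 𝓑) : Restr n G 𝓑 :=
  ⟨⟨B, fun x => (θ : Equiv.Perm (Fin n)) x⟩, hB, θ, θ.2, rfl⟩

theorem eq_restrict_iff {μ : Restr n G 𝓑} {θ : G} :
    μ = restrict θ μ.2.1 ↔ ∀ x, μ.1.2 x = (θ : Equiv.Perm (Fin n)) x := by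
  obtain ⟨⟨B, f⟩, hμ⟩ := μ
  simp [restrict, Subtype.ext_iff, funext_iff]

theorem exists_eq_restrict (μ : Restr n G 𝓑) :
    ∃ (θ : G) (B : Set (Fin n)) (hB : B ∈ 𝓑), μ = restrict θ hB := by
  obtain ⟨hB, θ, hθ, hμ⟩ := μ.2
  exact ⟨⟨θ, hθ⟩, μ.1.1, hB, eq_restrict_iff.2 (congrFun hμ)⟩

end Restr

namespace UPt

variable {n : ℕ} {G : Subgroup (Equiv.Perm (Fin n))} {𝓑 : Set (Set (Fin n))}

section Comparabilities

variable {x y : UPt n G 𝓑}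

theorem transGen_step_of_lt (h : x < y) : Relation.TransGen (UStep n G 𝓑) x y :=
  (Relation.reflTransGen_iff_eq_or_transGen.1 h.le).resolve_left h.ne'

theorem exists_le_step_of_lt (h : x < y) : ∃ z, x ≤ z ∧ UStep n G 𝓑 z y :=
  Relation.TransGen.tail'_iff.1 (transGen_step_of_lt h)

theorem rank_strictMono : StrictMono (rank : UPt n G 𝓑 → ℕ) := fun _ _ h => by
  simpa only [Relation.transGen_eq_self] using
    (transGen_step_of_lt h).lift rank fun _ _ => UStep.rank_lt

theorem lt_of_step (h : UStep n G 𝓑 x y) : x < y :=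
  lt_of_le_of_ne (.single h) fun hxy => h.rank_lt.ne (congrArg rank hxy)

theorem step_of_lt_of_rank_le (h : x < y) (hr : y.rank ≤ x.rank + 1) : UStep n G 𝓑 x y := by
  obtain ⟨z, hxz, hzy⟩ := exists_le_step_of_lt h
  obtain rfl | hlt := hxz.eq_or_lt
  · exact hzy
  · have hrank_xz := rank_strictMono hlt
    have hrank_zy := hzy.rank_lt
    omega

theorem exists_eq_low_of_lt_up {i : Fin n} (h : x < up i) : ∃ j, x = low j := by
  cases step_of_lt_of_rank_le h (Nat.le_add_left _ _) <;> exact ⟨_, rfl⟩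

theorem low_le_up_iff {i j : Fin n} : (low j : UPt n G 𝓑) ≤ up i ↔ i ⩿ j := by
  rw [wcovBy_iff_eq_or_covBy, Fin.covBy_iff, Order.covBy_iff_add_one_eq]
  constructor
  · intro h
    cases step_of_lt_of_rank_le (h.lt_of_ne nofun) le_rfl with
    | fence_eq => exact Or.inl rfl
    | fence_succ _ _ h => exact Or.inr h.symm
  · rintro (rfl | h)
    · exact (lt_of_step (.fence_eq i)).le
    · exact (lt_of_step (.fence_succ i j h.symm)).le

theorem up_le_cell_iff {i : Fin n} {μ : Restr n G 𝓑} {j : μ.1.1} :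
    (up i : UPt n G 𝓑) ≤ cell μ j ↔ i = j := by
  constructor
  · intro h
    cases step_of_lt_of_rank_le (h.lt_of_ne nofun) le_rfl
    rfl
  · rintro rfl
    exact (lt_of_step (.up_cell μ j)).le

theorem cell_le_pt_iff {μ : Restr n G 𝓑} {j : μ.1.1} {k : Fin n} :
    (cell μ j : UPt n G 𝓑) ≤ pt k ↔ k = μ.1.2 j := by
  constructor
  · intro h
    cases step_of_lt_of_rank_le (h.lt_of_ne nofun) le_rfl
    rfl
  · rintro rfl
    exact (lt_of_step (.cell_pt μ j)).le

theorem grp_le_cell_iff {θ : G} {μ : Restr n G 𝓑} {j : μ.1.1} :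
    (grp θ : UPt n G 𝓑) ≤ cell μ j ↔ μ = Restr.restrict θ μ.2.1 := by
  rw [Restr.eq_restrict_iff]
  refine ⟨fun h => ?_, fun h => (lt_of_step (.grp_cell θ μ j h)).le⟩
  obtain ⟨z, hz, hstep⟩ := exists_le_step_of_lt (h.lt_of_ne nofun)
  cases hstep with
  | up_cell =>
    obtain ⟨i, hi⟩ := exists_eq_low_of_lt_up (hz.lt_of_ne nofun)
    cases hi
  | grp_cell τ _ _ hτ =>
    obtain h | h := hz.eq_or_lt
    · cases h
      exact hτ
    · exact absurd (rank_strictMono h) (lt_irrefl 0)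

end Comparabilities

section Height

theorem exists_step_of_rank_ne_zero (hcov : ∀ i, ∃ B ∈ 𝓑, i ∈ B) {x : UPt n G 𝓑}
    (hx : x.rank ≠ 0) : ∃ y, UStep n G 𝓑 y x ∧ x.rank = y.rank + 1 := by
  cases x with
  | low i => exact absurd rfl hx
  | grp θ => exact absurd rfl hx
  | up i => exact ⟨_, .fence_eq i, rfl⟩
  | cell μ j => exact ⟨_, .up_cell μ j, rfl⟩
  | pt i =>
    obtain ⟨B, hB, hi⟩ := hcov i
    exact ⟨_, .cell_pt (Restr.restrict 1 hB) ⟨i, hi⟩, rfl⟩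

theorem exists_lt_rank_eq (hcov : ∀ i, ∃ B ∈ 𝓑, i ∈ B) (x : UPt n G 𝓑) (k : ℕ)
    (hk : k < x.rank) : ∃ y < x, y.rank = k := by
  obtain ⟨y, hyx, hy⟩ := exists_step_of_rank_ne_zero hcov (Nat.ne_zero_of_lt hk)
  obtain rfl | hlt := (show k ≤ y.rank by omega).eq_or_lt
  · exact ⟨y, lt_of_step hyx, rfl⟩
  · obtain ⟨z, hzy, hz⟩ := exists_lt_rank_eq hcov y k hlt
    exact ⟨z, hzy.trans (lt_of_step hyx), hz⟩
termination_by x.rank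

theorem height_eq_rank (hcov : ∀ i, ∃ B ∈ 𝓑, i ∈ B) (x : UPt n G 𝓑) :
    Order.height x = x.rank :=
  (Order.height_eq_of_strictMono rank rank_strictMono (exists_lt_rank_eq hcov) x).trans
    (Order.height_nat _)

theorem rank_apply (hcov : ∀ i, ∃ B ∈ 𝓑, i ∈ B) (Ψ : UPt n G 𝓑 ≃o UPt n G 𝓑)
    (x : UPt n G 𝓑) : (Ψ x).rank = x.rank := by
  exact_mod_cast (height_eq_rank hcov _).symm.trans
    ((Order.height_orderIso Ψ x).trans (height_eq_rank hcov x))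

end Height

section Layers

theorem rank_eq_zero_iff {x : UPt n G 𝓑} : x.rank = 0 ↔ (∃ i, x = low i) ∨ ∃ θ, x = grp θ := by
  cases x <;> simp [rank]

theorem rank_eq_one_iff {x : UPt n G 𝓑} : x.rank = 1 ↔ ∃ i, x = up i := by
  cases x <;> simp [rank]

theorem rank_eq_two_iff {x : UPt n G 𝓑} : x.rank = 2 ↔ ∃ μ j, x = cell μ j := by
  cases x <;> simp [rank]

theorem rank_eq_three_iff {x : UPt n G 𝓑} : x.rank = 3 ↔ ∃ i, x = pt i := by
  cases x <;> simp [rank]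

variable (hcov : ∀ i, ∃ B ∈ 𝓑, i ∈ B) (Ψ : UPt n G 𝓑 ≃o UPt n G 𝓑)
include hcov

theorem exists_apply_up_eq (i : Fin n) : ∃ j, Ψ (up i) = up j :=
  rank_eq_one_iff.1 (rank_apply hcov Ψ _)

theorem exists_apply_cell_eq (μ : Restr n G 𝓑) (j : μ.1.1) : ∃ ν k, Ψ (cell μ j) = cell ν k :=
  rank_eq_two_iff.1 (rank_apply hcov Ψ _)

theorem exists_apply_pt_eq (i : Fin n) : ∃ j, Ψ (pt i) = pt j :=
  rank_eq_three_iff.1 (rank_apply hcov Ψ _)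

theorem exists_apply_low_eq (i : Fin n) : ∃ j, Ψ (low i) = low j := by
  obtain ⟨k, hk⟩ := exists_apply_up_eq hcov Ψ i
  exact exists_eq_low_of_lt_up (hk ▸ Ψ.lt_iff_lt.2 (lt_of_step (.fence_eq i)))

theorem exists_apply_grp_eq (θ : G) : ∃ τ, Ψ (grp θ) = grp τ := by
  refine (rank_eq_zero_iff.1 (rank_apply hcov Ψ (grp θ))).resolve_left ?_
  rintro ⟨i, hi⟩
  obtain ⟨j, hj⟩ := exists_apply_low_eq hcov Ψ.symm i
  cases (Ψ.symm_apply_eq.2 hi.symm).symm.trans hj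

end Layers

section Action

theorem apply_low_and_apply_up (hcov : ∀ i, ∃ B ∈ 𝓑, i ∈ B) (Ψ : UPt n G 𝓑 ≃o UPt n G 𝓑) :
    (∀ i, Ψ (low i) = low i) ∧ ∀ i, Ψ (up i) = up i := by
  choose a ha using exists_apply_low_eq hcov Ψ
  choose b hb using exists_apply_up_eq hcov Ψ
  have ha_inj : a.Injective := fun i j h =>
    low.inj (Ψ.injective (by rw [ha, ha, h]))
  have hb_inj : b.Injective := fun i j h =>
    up.inj (Ψ.injective (by rw [hb, hb, h]))
  have hab : ∀ i j, i ⩿ j → b i ≤ a j := fun i j hij => by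
    have hle : Ψ (low j) ≤ Ψ (up i) := Ψ.le_iff_le.2 (low_le_up_iff.2 hij)
    rw [ha, hb] at hle
    exact (low_le_up_iff.1 hle).le
  obtain ⟨rfl, rfl⟩ :=
    eq_id_of_forall_wcovBy_le (Finite.injective_iff_surjective.1 ha_inj) hb_inj hab
  exact ⟨ha, hb⟩

variable (hpart : ∀ i, ∃! B, B ∈ 𝓑 ∧ i ∈ B) (Ψ : UPt n G 𝓑 ≃o UPt n G 𝓑)
include hpart

theorem apply_cell_restrict {θ τ : G} (hθ : Ψ (grp θ) = grp τ) {B : Set (Fin n)} (hB : B ∈ 𝓑)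
    (j : B) : Ψ (cell (Restr.restrict θ hB) j) = cell (Restr.restrict τ hB) j := by
  have hcov := fun i => (hpart i).exists
  obtain ⟨ν, k, hν⟩ := exists_apply_cell_eq hcov Ψ (Restr.restrict θ hB) j
  have hjk : (j : Fin n) = k := by
    have hle : Ψ (up j) ≤ Ψ (cell (Restr.restrict θ hB) j) :=
      Ψ.le_iff_le.2 (up_le_cell_iff.2 rfl)
    rw [(apply_low_and_apply_up hcov Ψ).2, hν] at hle
    exact up_le_cell_iff.1 hle
  obtain ⟨C, hC, rfl⟩ : ∃ (C : Set (Fin n)) (hC : C ∈ 𝓑), ν = Restr.restrict τ hC := by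
    have hle : Ψ (grp θ) ≤ Ψ (cell (Restr.restrict θ hB) j) :=
      Ψ.le_iff_le.2 (grp_le_cell_iff.2 rfl)
    rw [hθ, hν] at hle
    exact ⟨_, ν.2.1, grp_le_cell_iff.1 hle⟩
  obtain rfl : C = B := (hpart j).unique ⟨hC, hjk ▸ k.2⟩ ⟨hB, j.2⟩
  rw [hν, Subtype.ext hjk]

theorem apply_pt_of_apply_grp {θ τ : G} (hθ : Ψ (grp θ) = grp τ) (j : Fin n) :
    Ψ (pt ((θ : Equiv.Perm (Fin n)) j)) = pt ((τ : Equiv.Perm (Fin n)) j) := by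
  obtain ⟨B, hB, hj⟩ := (hpart j).exists
  obtain ⟨k, hk⟩ :=
    exists_apply_pt_eq (fun i => (hpart i).exists) Ψ ((θ : Equiv.Perm (Fin n)) j)
  have hle : Ψ (cell (Restr.restrict θ hB) ⟨j, hj⟩) ≤ Ψ (pt ((θ : Equiv.Perm (Fin n)) j)) :=
    Ψ.le_iff_le.2 (cell_le_pt_iff.2 rfl)
  rw [apply_cell_restrict hpart Ψ hθ, hk] at hle
  rw [hk, cell_le_pt_iff.1 hle]

theorem apply_grp_of_apply_one {σ : G} (hσ : Ψ (grp 1) = grp σ) (θ : G) :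
    Ψ (grp θ) = grp (σ * θ) := by
  obtain ⟨τ, hτ⟩ := exists_apply_grp_eq (fun i => (hpart i).exists) Ψ θ
  suffices σ * θ = τ by rw [hτ, this]
  ext j : 2
  exact pt.inj <| (apply_pt_of_apply_grp hpart Ψ hσ _).symm.trans <|
    apply_pt_of_apply_grp hpart Ψ hτ j

end Action

end UPt

theorem automorphism_determined_by_restriction_general {n : ℕ}
    {G : Subgroup (Equiv.Perm (Fin n))} {𝓑 : Set (Set (Fin n))}
    (hpart : ∀ i, ∃! B, B ∈ 𝓑 ∧ i ∈ B) (Ψ : UPt n G 𝓑 ≃o UPt n G 𝓑) :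
    ∃ σ : G,
      (∀ j : Fin n, Ψ (UPt.pt j) = UPt.pt ((σ : Equiv.Perm (Fin n)) j)) ∧
      (∀ i : Fin n, Ψ (UPt.low i) = UPt.low i) ∧
      (∀ i : Fin n, Ψ (UPt.up i) = UPt.up i) ∧
      (∀ θ : G, Ψ (UPt.grp θ) = UPt.grp (σ * θ)) ∧
      (∀ (μ : Restr n G 𝓑) (j : μ.1.1),
        Ψ (UPt.cell μ j) = UPt.cell (Restr.comp σ μ) j) := by
  have hcov := fun i => (hpart i).exists
  obtain ⟨σ, hσ⟩ := UPt.exists_apply_grp_eq hcov Ψ 1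
  have hgrp := UPt.apply_grp_of_apply_one hpart Ψ hσ
  obtain ⟨hlow, hup⟩ := UPt.apply_low_and_apply_up hcov Ψ
  refine ⟨σ, UPt.apply_pt_of_apply_grp hpart Ψ hσ, hlow, hup, hgrp, fun μ j => ?_⟩
  obtain ⟨θ, B, hB, rfl⟩ := Restr.exists_eq_restrict μ
  change Ψ (UPt.cell (Restr.restrict θ hB) j) = UPt.cell (Restr.restrict (σ * θ) hB) j
  exact UPt.apply_cell_restrict hpart Ψ (hgrp θ) hB j

/-- Every order-automorphism `Ψ` of `U_{G⋌𝓑}` maps `T` onto itself via a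
permutation `σ = Ψ|_T` belonging to `G`, and `Ψ` is uniquely determined by `σ`:
`Ψ` fixes the fence `F` pointwise, `Ψ(θ) = σθ` for `θ ∈ G`, and `Ψ(j,μ) = (j, σ∘μ)`. -/
theorem automorphism_determined_by_restriction (n : ℕ) (hn : 1 ≤ n)
    (G : Subgroup (Equiv.Perm (Fin n))) (P : BlockPartition n G)
    (Ψ : UPt n G P.blocks ≃o UPt n G P.blocks) :
    ∃ σ : G,
      (∀ j : Fin n, Ψ (UPt.pt j) = UPt.pt ((σ : Equiv.Perm (Fin n)) j)) ∧
      (∀ i : Fin n, Ψ (UPt.low i) = UPt.low i) ∧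
      (∀ i : Fin n, Ψ (UPt.up i) = UPt.up i) ∧
      (∀ θ : G, Ψ (UPt.grp θ) = UPt.grp (σ * θ)) ∧
      (∀ (μ : Restr n G P.blocks) (j : μ.1.1),
        Ψ (UPt.cell μ j) = UPt.cell (Restr.comp σ μ) j) :=
  automorphism_determined_by_restriction_general P.partitions Ψ
end
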